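/- Suppose the feasible set of Problem 3 is nonempty. Then there exists ρ₀ > 0 such that for all ρ > ρ₀, the optimal value of the penalized Problem 5 equals the optimal value Ē* of Problem 3, where Problem 5 is obtained from Problem 3 by: replacing variables p by e via e = t·p and the successful transmission constraints by N_S·D(l)·y(S,k,l) ≤ (B/T)·∑_ω q(ω)·φ_{H(ω)(k)/n₀}(t(ω,S,l), e(ω,S,l)) for all S ∈ I, k ∈ S, l ∈ {1,…,L}; relaxing the binary constraints y(S,k,l) ∈ {0,1} to 0 ≤ y(S,k,l) ≤ 1; and adding the penalty term ρ·P(y), P(y) = ∑_{S∈I} ∑_{k∈S} ∑_{l=1}^{L} y(S,k,l)·(1 − y(S,k,l)), to the objective ∑_ω q(ω)·∑_{S∈I} ∑_{l=1}^{L} e(ω,S,l) + β·∑_{S∈I} ∑_{k∈S} N_S·E(k)·(∑_{l=1}^{L} l·y(S,k,l) − r(k)). -/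

import Mathlib

/-- `φ_a(t,e) = t·log₂(1 + a·e/t)` for `t > 0`, extended by `0` for `t ≤ 0`. -/
noncomputable def phi (a t e : ℝ) : ℝ :=
  if 0 < t then t * (Real.log (1 + a * e / t) / Real.log 2) else 0

/-!
A fractional selection `y` is rounded at the scale of its penalty: if the heaviest level of `y`
meets the quality requirement, selecting it is off by `O(P(y))`; otherwise `y` is bounded away from
all binary selections, `P(y)` is bounded below, and selecting the best level is again off by
`O(P(y))`. Rounding may violate the rate constraints, by an amount `O(P(y))`. Since `φ_a` is
concave, they are restored by moving the resources a fraction `O(P(y))` of the way towards a fixed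
allocation that satisfies all of them with room to spare, which costs energy `O(P(y))`.
So once `ρ` exceeds the constants involved, every point of Problem 5 is dominated by a binary one,
and on binary points, where `P` vanishes, `e = t * p` identifies the two problems.
-/

open Filter

section Phi

variable {a t t' e e' : ℝ}

lemma phi_zero_left (a e : ℝ) : phi a 0 e = 0 := if_neg (lt_irrefl 0)

lemma phi_of_pos (ht : 0 < t) (a e : ℝ) :
    phi a t e = t * Real.log (t⁻¹ • (t + a * e)) / Real.log 2 := by
  rw [phi, if_pos ht, smul_eq_mul, inv_mul_eq_div, add_div, div_self ht.ne', mul_div_assoc t]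

lemma phi_of_nonneg (ht : 0 ≤ t) (a e : ℝ) :
    phi a t e = t * (Real.log (1 + a * (e / t)) / Real.log 2) := by
  rcases ht.eq_or_lt with rfl | ht
  · simp [phi]
  · rw [phi, if_pos ht, mul_div_assoc a]

lemma phi_mul_right (ht : 0 ≤ t) (a p : ℝ) :
    phi a t (t * p) = t * (Real.log (1 + a * p) / Real.log 2) := by
  rcases ht.eq_or_lt with rfl | ht
  · simp [phi]
  · rw [phi_of_nonneg ht.le, mul_div_cancel_left₀ _ ht.ne']

lemma phi_mul_mul {c : ℝ} (hc : 0 ≤ c) (a t e : ℝ) : phi a (c * t) (c * e) = c * phi a t e := by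
  rcases hc.eq_or_lt with rfl | hc
  · simp [phi]
  · simp only [phi, mul_pos_iff_of_pos_left hc, mul_left_comm a c,
      mul_div_mul_left _ _ hc.ne', mul_ite, mul_zero, mul_assoc]

lemma phi_mono_right (ha : 0 ≤ a) (he : 0 ≤ e) (hee' : e ≤ e') : phi a t e ≤ phi a t e' := by
  unfold phi
  split_ifs with ht
  · have : 0 ≤ a * e / t := by positivity
    have : 0 < Real.log 2 := Real.log_pos one_lt_two
    gcongr
  · rfl

lemma mul_comp_inv_smul_add_le_of_concaveOn {V : Type*} [AddCommGroup V] [Module ℝ V] {s : Set V}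
    {f : V → ℝ} (hf : ConcaveOn ℝ s f) (ht : 0 < t) (ht' : 0 < t') {x x' : V}
    (hx : t⁻¹ • x ∈ s) (hx' : t'⁻¹ • x' ∈ s) :
    t * f (t⁻¹ • x) + t' * f (t'⁻¹ • x') ≤ (t + t') * f ((t + t')⁻¹ • (x + x')) := by
  have hsum : 0 < t + t' := add_pos ht ht'
  have barycenter : (t / (t + t')) • t⁻¹ • x + (t' / (t + t')) • t'⁻¹ • x' =
      (t + t')⁻¹ • (x + x') := by
    rw [smul_smul, smul_smul, smul_add]
    congr 2 <;> field_simp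
  have jensen := hf.2 hx hx' (div_pos ht hsum).le (div_pos ht' hsum).le (by field_simp)
  rw [barycenter] at jensen
  calc t * f (t⁻¹ • x) + t' * f (t'⁻¹ • x')
      = (t + t') * ((t / (t + t')) • f (t⁻¹ • x) + (t' / (t + t')) • f (t'⁻¹ • x')) := by
        simp only [smul_eq_mul]
        field_simp
    _ ≤ (t + t') * f ((t + t')⁻¹ • (x + x')) := by gcongr

lemma phi_add_le (ha : 0 ≤ a) (ht : 0 ≤ t) (ht' : 0 ≤ t') (he : 0 ≤ e) (he' : 0 ≤ e') :
    phi a t e + phi a t' e' ≤ phi a (t + t') (e + e') := by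
  rcases ht.eq_or_lt with rfl | ht
  · simpa only [phi_zero_left, zero_add] using phi_mono_right ha he' (le_add_of_nonneg_left he)
  rcases ht'.eq_or_lt with rfl | ht'
  · simpa only [phi_zero_left, add_zero] using phi_mono_right ha he (le_add_of_nonneg_right he')
  rw [phi_of_pos ht, phi_of_pos ht', phi_of_pos (add_pos ht ht'), ← add_div, mul_add,
    add_add_add_comm]
  have : 0 < Real.log 2 := Real.log_pos one_lt_two
  gcongr
  exact mul_comp_inv_smul_add_le_of_concaveOn strictConcaveOn_log_Ioi.concaveOn ht ht'
    (Set.mem_Ioi.2 (by positivity)) (Set.mem_Ioi.2 (by positivity))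

lemma concaveOn_phi (ha : 0 ≤ a) :
    ConcaveOn ℝ (Set.Ici (0 : ℝ × ℝ)) fun x ↦ phi a x.1 x.2 := by
  refine ⟨convex_Ici 0, fun x hx x' hx' c c' hc hc' _ ↦ ?_⟩
  simp only [smul_eq_mul, Prod.fst_add, Prod.snd_add, Prod.smul_fst, Prod.smul_snd,
    ← phi_mul_mul hc, ← phi_mul_mul hc']
  exact phi_add_le ha (mul_nonneg hc hx.1) (mul_nonneg hc' hx'.1) (mul_nonneg hc hx.2)
    (mul_nonneg hc' hx'.2)

lemma tendsto_phi_atTop (ha : 0 < a) (ht : 0 < t) : Tendsto (phi a t) atTop atTop := by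
  have : Tendsto (fun e ↦ 1 + a * e / t) atTop atTop :=
    tendsto_atTop_add_const_left _ _ ((tendsto_id.const_mul_atTop ha).atTop_div_const ht)
  have := ((Real.tendsto_log_atTop.comp this).atTop_div_const
    (Real.log_pos one_lt_two)).const_mul_atTop ht
  exact this.congr fun e ↦ (if_pos ht).symm

end Phi

section Rounding

variable {Λ : Type*} [Fintype Λ] {y : Λ → ℝ}

/-- The penalty `∑ l, y l * (1 - y l)` of a single selection vector: on the standard simplex it is
nonnegative, and it vanishes exactly at the vertices. -/
def fractionality (y : Λ → ℝ) : ℝ := ∑ l, y l * (1 - y l)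

lemma mul_one_sub_nonneg_of_mem_stdSimplex (hy : y ∈ stdSimplex ℝ Λ) (l : Λ) :
    0 ≤ y l * (1 - y l) :=
  mul_nonneg (hy.1 l) (sub_nonneg.2 (mem_Icc_of_mem_stdSimplex hy l).2)

lemma fractionality_nonneg (hy : y ∈ stdSimplex ℝ Λ) : 0 ≤ fractionality y :=
  Finset.sum_nonneg fun l _ ↦ mul_one_sub_nonneg_of_mem_stdSimplex hy l

lemma fractionality_eq_zero (hy : ∀ l, y l = 0 ∨ y l = 1) : fractionality y = 0 :=
  Finset.sum_eq_zero fun l _ ↦ by rcases hy l with h | h <;> simp [h]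

lemma nonempty_of_mem_stdSimplex (hy : y ∈ stdSimplex ℝ Λ) : Nonempty Λ := by
  by_contra h
  rw [not_nonempty_iff] at h
  exact zero_ne_one (Fintype.sum_empty y ▸ hy.2)

lemma exists_one_sub_le_card_mul_fractionality (hy : y ∈ stdSimplex ℝ Λ) :
    ∃ m, 1 - y m ≤ Fintype.card Λ * fractionality y := by
  have : Nonempty Λ := nonempty_of_mem_stdSimplex hy
  obtain ⟨m, -, hm⟩ : ∃ m ∈ Finset.univ, (Fintype.card Λ : ℝ)⁻¹ ≤ y m :=
    Finset.exists_le_of_sum_le Finset.univ_nonempty (by simp [hy.2])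
  refine ⟨m, ?_⟩
  calc 1 - y m ≤ Fintype.card Λ * y m * (1 - y m) :=
        le_mul_of_one_le_left (sub_nonneg.2 (mem_Icc_of_mem_stdSimplex hy m).2)
          ((inv_le_iff_one_le_mul₀' (by positivity)).1 hm)
    _ = Fintype.card Λ * (y m * (1 - y m)) := mul_assoc ..
    _ ≤ Fintype.card Λ * fractionality y := by
        gcongr
        exact Finset.single_le_sum (f := fun l ↦ y l * (1 - y l))
          (fun l _ ↦ mul_one_sub_nonneg_of_mem_stdSimplex hy l) (Finset.mem_univ m)

lemma sum_mul_le_add_mul_one_sub (hy : y ∈ stdSimplex ℝ Λ) {f : Λ → ℝ} {m : Λ} {R : ℝ}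
    (hf : ∀ l, f l ≤ f m + R) : ∑ l, f l * y l ≤ f m + R * (1 - y m) := by
  classical
  have hrest : ∑ l ∈ Finset.univ.erase m, y l = 1 - y m := by
    rw [← hy.2, ← Finset.add_sum_erase _ y (Finset.mem_univ m), add_sub_cancel_left]
  calc ∑ l, f l * y l
      = f m * y m + ∑ l ∈ Finset.univ.erase m, f l * y l :=
        (Finset.add_sum_erase _ _ (Finset.mem_univ m)).symm
    _ ≤ f m * y m + ∑ l ∈ Finset.univ.erase m, (f m + R) * y l := by
        gcongr with l
        · exact hy.1 l
        · exact hf l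
    _ = f m + R * (1 - y m) := by rw [← Finset.mul_sum, hrest]; ring

/-- If the heaviest level `m` of `y` fails the requirement `τ`, then
`τ - v m ≤ R * (1 - y m)` keeps `y` away from the vertices, so any admissible level will do. -/
lemma eventually_exists_one_sub_le_mul_fractionality (v : Λ → ℝ) (τ : ℝ) :
    ∀ᶠ C in atTop, ∀ y ∈ stdSimplex ℝ Λ, τ ≤ ∑ l, v l * y l →
      ∃ l, τ ≤ v l ∧ 1 - y l ≤ C * fractionality y := by
  obtain ⟨R, hR⟩ := Finite.exists_le fun p : Λ × Λ ↦ v p.1 - v p.2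
  have hv (m l : Λ) : v l ≤ v m + R := sub_le_iff_le_add'.1 (hR (l, m))
  filter_upwards [eventually_ge_atTop (Fintype.card Λ : ℝ), eventually_all.2 fun m ↦
    eventually_ge_atTop (R / (τ - v m) * Fintype.card Λ)] with C hcard hC y hy hτ
  have hfrac : 0 ≤ fractionality y := fractionality_nonneg hy
  obtain ⟨m, hm⟩ := exists_one_sub_le_card_mul_fractionality hy
  rcases le_or_gt τ (v m) with hτm | hτm
  · exact ⟨m, hτm, hm.trans (by gcongr)⟩
  have : Nonempty Λ := ⟨m⟩
  obtain ⟨l, hl⟩ := Finite.exists_max v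
  refine ⟨l, ?_, ?_⟩
  · have := sum_mul_le_add_mul_one_sub hy (R := 0) fun k ↦ (hl k).trans_eq (add_zero _).symm
    linarith
  have hgap : τ - v m ≤ R * (1 - y m) := by linarith [sum_mul_le_add_mul_one_sub hy (hv m)]
  have hR0 : 0 ≤ R := by linarith [hv m m]
  calc 1 - y l ≤ 1 := sub_le_self 1 (hy.1 l)
    _ ≤ R / (τ - v m) * (1 - y m) := by
        rwa [div_mul_eq_mul_div, one_le_div (sub_pos.2 hτm)]
    _ ≤ R / (τ - v m) * (Fintype.card Λ * fractionality y) := by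
        have := sub_pos.2 hτm
        gcongr
    _ ≤ C * fractionality y := by
        rw [← mul_assoc]
        gcongr
        exact hC m

/-- `y'` is a binary selection of a level whose value is at least the requirement `τ`, and it
exceeds `y` by at most `ε` in each coordinate and in value. -/
structure IsRounding (v : Λ → ℝ) (τ ε : ℝ) (y y' : Λ → ℝ) : Prop where
  binary : ∀ l, y' l = 0 ∨ y' l = 1
  sum_eq_one : ∑ l, y' l = 1
  requirement_le : τ ≤ ∑ l, v l * y' l
  le_add : ∀ l, y' l ≤ y l + ε
  value_le : ∑ l, v l * y' l ≤ ∑ l, v l * y l + ε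

lemma IsRounding.mono {v y y' : Λ → ℝ} {τ ε δ : ℝ} (h : IsRounding v τ ε y y') (hεδ : ε ≤ δ) :
    IsRounding v τ δ y y' where
  __ := h
  le_add l := (h.le_add l).trans (by gcongr)
  value_le := h.value_le.trans (by gcongr)

lemma isRounding_single [DecidableEq Λ] {v : Λ → ℝ} {τ ε R : ℝ} {m : Λ}
    (hy : y ∈ stdSimplex ℝ Λ) (hτ : τ ≤ v m) (hm : 1 - y m ≤ ε) (hv : ∀ l, v m ≤ v l + R)
    (hR : R * (1 - y m) ≤ ε) : IsRounding v τ ε y (Pi.single m 1) where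
  binary l := by rcases eq_or_ne l m with rfl | h <;> simp [*]
  sum_eq_one := by simp
  requirement_le := by simpa [Pi.single_apply] using hτ
  le_add l := by
    rcases eq_or_ne l m with rfl | h
    · rw [Pi.single_eq_same]
      linarith
    · rw [Pi.single_eq_of_ne h]
      linarith [hy.1 l, (mem_Icc_of_mem_stdSimplex hy m).2]
  value_le := by
    have := sum_mul_le_add_mul_one_sub hy (f := -v) (m := m) (R := R) fun l ↦ by
      simp only [Pi.neg_apply]
      linarith [hv l]
    simp only [Pi.neg_apply, neg_mul, Finset.sum_neg_distrib] at this
    simp only [Pi.single_apply, mul_ite, mul_one, mul_zero, Finset.sum_ite_eq', Finset.mem_univ,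
      if_true]
    linarith

lemma eventually_exists_isRounding (v : Λ → ℝ) (τ : ℝ) :
    ∀ᶠ C in atTop, ∀ y ∈ stdSimplex ℝ Λ, τ ≤ ∑ l, v l * y l →
      ∃ y', IsRounding v τ (C * fractionality y) y y' := by
  classical
  obtain ⟨R, hR⟩ := Finite.exists_le fun p : Λ × Λ ↦ v p.1 - v p.2
  obtain ⟨C₀, hround⟩ := (eventually_exists_one_sub_le_mul_fractionality v τ).exists
  filter_upwards [eventually_ge_atTop C₀, eventually_ge_atTop (R * C₀)] with C hC hRC y hy hτ
  have hfrac : 0 ≤ fractionality y := fractionality_nonneg hy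
  obtain ⟨m, hτm, hm⟩ := hround y hy hτ
  have hv (l : Λ) : v m ≤ v l + R := sub_le_iff_le_add'.1 (hR (m, l))
  have hR0 : 0 ≤ R := by linarith [hv m]
  refine ⟨Pi.single m 1, isRounding_single hy hτm (hm.trans (by gcongr)) hv ?_⟩
  calc R * (1 - y m) ≤ R * (C₀ * fractionality y) := by gcongr
    _ ≤ C * fractionality y := by rw [← mul_assoc]; gcongr

end Rounding

section Blend

variable {ι Ω Λ : Type*}

/-- The convex combination of the allocation `a` with the constant allocation `c`. -/
def blend (s : ℝ) (a : Ω → Finset ι → Λ → ℝ) (c : ℝ) : Ω → Finset ι → Λ → ℝ :=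
  fun ω S l ↦ (1 - s) * a ω S l + s * c

lemma blend_nonneg {s c : ℝ} {a : Ω → Finset ι → Λ → ℝ} (hs : s ∈ Set.Icc 0 1)
    (ha : ∀ ω S l, 0 ≤ a ω S l) (hc : 0 ≤ c) (ω : Ω) (S : Finset ι) (l : Λ) :
    0 ≤ blend s a c ω S l :=
  add_nonneg (mul_nonneg (sub_nonneg.2 hs.2) (ha ω S l)) (mul_nonneg hs.1 hc)

lemma sum_blend [Fintype Λ] (s : ℝ) (a : Ω → Finset ι → Λ → ℝ) (c : ℝ) (I : Finset (Finset ι))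
    (ω : Ω) :
    ∑ S ∈ I, ∑ l, blend s a c ω S l =
      (1 - s) * ∑ S ∈ I, ∑ l, a ω S l + s * (I.card * (Fintype.card Λ * c)) := by
  simp only [blend, Finset.sum_add_distrib, ← Finset.mul_sum, Finset.sum_const, Finset.card_univ,
    nsmul_eq_mul]
  ring

end Blend

/-- The data of Problems 3 and 5 for users `ι`, channel states `Ω` and quality levels `Λ`, with the
sign conditions on which exact penalization rests. The levels form an arbitrary type in place of
`{1, …, L}`: level `l` has value `v l`, and user `k` requires the value `r k`. -/
structure MulticastProblem (ι Ω Λ : Type*) [Fintype Ω] where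
  v : Λ → ℝ
  D : Λ → ℝ
  D_nonneg : ∀ l, 0 ≤ D l
  r : ι → ℝ
  q : Ω → ℝ
  q_nonneg : ∀ ω, 0 ≤ q ω
  sum_q : ∑ ω, q ω = 1
  H : Ω → ι → ℝ
  H_pos : ∀ ω k, 0 < H ω k
  B : ℝ
  B_pos : 0 < B
  T : ℝ
  T_pos : 0 < T
  n₀ : ℝ
  n₀_pos : 0 < n₀
  I : Finset (Finset ι)
  N : Finset ι → ℕ
  E : ι → ℝ
  E_nonneg : ∀ k, 0 ≤ E k
  β : ℝ
  β_nonneg : 0 ≤ β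

namespace MulticastProblem

variable {ι Ω Λ : Type*} [Fintype Ω] (M : MulticastProblem ι Ω Λ)

section Throughput

/-- The average rate at which user `k` decodes a stream that receives time `t ω` and energy `e ω`
in state `ω`. -/
noncomputable def throughput (k : ι) (t e : Ω → ℝ) : ℝ :=
  M.B / M.T * ∑ ω, M.q ω * phi (M.H ω k / M.n₀) (t ω) (e ω)

lemma throughput_mul {t : Ω → ℝ} (ht : ∀ ω, 0 ≤ t ω) (k : ι) (p : Ω → ℝ) :
    M.throughput k t (fun ω ↦ t ω * p ω) = M.B / M.T *
      ∑ ω, M.q ω * (t ω * (Real.log (1 + p ω * M.H ω k / M.n₀) / Real.log 2)) := by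
  simp only [throughput, phi_mul_right (ht _), mul_comm (M.H _ k / M.n₀), mul_div_assoc]

lemma throughput_of_nonneg {t : Ω → ℝ} (ht : ∀ ω, 0 ≤ t ω) (k : ι) (e : Ω → ℝ) :
    M.throughput k t e = M.B / M.T *
      ∑ ω, M.q ω * (t ω * (Real.log (1 + e ω / t ω * M.H ω k / M.n₀) / Real.log 2)) := by
  simp only [throughput, phi_of_nonneg (ht _), mul_comm (M.H _ k / M.n₀), mul_div_assoc]

lemma concaveOn_throughput (k : ι) :
    ConcaveOn ℝ (Set.Ici (0 : (Ω → ℝ) × (Ω → ℝ))) fun x ↦ M.throughput k x.1 x.2 := by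
  refine ⟨convex_Ici 0, fun x hx x' hx' c c' hc hc' hcc' ↦ ?_⟩
  have hphi (ω : Ω) := (concaveOn_phi (div_pos (M.H_pos ω k) M.n₀_pos).le).2
    (x := (x.1 ω, x.2 ω)) ⟨hx.1 ω, hx.2 ω⟩ (y := (x'.1 ω, x'.2 ω)) ⟨hx'.1 ω, hx'.2 ω⟩ hc hc' hcc'
  have hBT : 0 ≤ M.B / M.T := (div_pos M.B_pos M.T_pos).le
  simp only [throughput, smul_eq_mul]
  rw [mul_left_comm, mul_left_comm c', ← mul_add, Finset.mul_sum, Finset.mul_sum,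
    ← Finset.sum_add_distrib]
  gcongr with ω
  rw [mul_left_comm, mul_left_comm c', ← mul_add]
  exact mul_le_mul_of_nonneg_left (hphi ω) (M.q_nonneg ω)

lemma tendsto_throughput_atTop (k : ι) {t₀ : ℝ} (ht₀ : 0 < t₀) :
    Tendsto (fun c ↦ M.throughput k (fun _ ↦ t₀) fun _ ↦ c) atTop atTop := by
  refine Tendsto.const_mul_atTop (div_pos M.B_pos M.T_pos) (tendsto_atTop.2 fun R ↦ ?_)
  filter_upwards [eventually_all.2 fun ω ↦ (tendsto_phi_atTop
    (div_pos (M.H_pos ω k) M.n₀_pos) ht₀).eventually_ge_atTop R] with c hc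
  calc R = ∑ ω, M.q ω * R := by rw [← Finset.sum_mul, M.sum_q, one_mul]
    _ ≤ ∑ ω, M.q ω * phi (M.H ω k / M.n₀) t₀ c := by
        gcongr with ω
        · exact M.q_nonneg ω
        · exact hc ω

end Throughput

variable [Fintype Λ]

/-- The feasible set of Problem 3, of points `(y, t, p)`. -/
def binaryFeasible : Set ((Finset ι → ι → Λ → ℝ) ×
    (Ω → Finset ι → Λ → ℝ) × (Ω → Finset ι → Λ → ℝ)) :=
  {x | (∀ ω S l, 0 ≤ x.2.1 ω S l) ∧ (∀ ω S l, 0 ≤ x.2.2 ω S l) ∧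
    (∀ ω, ∑ S ∈ M.I, ∑ l, x.2.1 ω S l ≤ M.T) ∧
    (∀ S ∈ M.I, ∀ k ∈ S, ∀ l, x.1 S k l = 0 ∨ x.1 S k l = 1) ∧
    (∀ S ∈ M.I, ∀ k ∈ S, ∑ l, x.1 S k l = 1) ∧
    (∀ S ∈ M.I, ∀ k ∈ S, M.r k ≤ ∑ l, M.v l * x.1 S k l) ∧
    (∀ S ∈ M.I, ∀ k ∈ S, ∀ l, M.N S * M.D l * x.1 S k l ≤
      M.B / M.T * ∑ ω, M.q ω * (x.2.1 ω S l *
        (Real.log (1 + x.2.2 ω S l * M.H ω k / M.n₀) / Real.log 2)))}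

/-- The feasible set of Problem 5, of points `(y, t, e)`. -/
def relaxedFeasible : Set ((Finset ι → ι → Λ → ℝ) ×
    (Ω → Finset ι → Λ → ℝ) × (Ω → Finset ι → Λ → ℝ)) :=
  {z | (∀ ω S l, 0 ≤ z.2.1 ω S l) ∧ (∀ ω S l, 0 ≤ z.2.2 ω S l) ∧
    (∀ ω, ∑ S ∈ M.I, ∑ l, z.2.1 ω S l ≤ M.T) ∧
    (∀ S ∈ M.I, ∀ k ∈ S, ∀ l, 0 ≤ z.1 S k l ∧ z.1 S k l ≤ 1) ∧
    (∀ S ∈ M.I, ∀ k ∈ S, ∑ l, z.1 S k l = 1) ∧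
    (∀ S ∈ M.I, ∀ k ∈ S, M.r k ≤ ∑ l, M.v l * z.1 S k l) ∧
    (∀ S ∈ M.I, ∀ k ∈ S, ∀ l, M.N S * M.D l * z.1 S k l ≤
      M.throughput k (fun ω ↦ z.2.1 ω S l) fun ω ↦ z.2.2 ω S l)}

/-- The expected transmission energy when `e ω S l` is spent on level `l` for group `S` in
state `ω`. -/
def transmissionEnergy (e : Ω → Finset ι → Λ → ℝ) : ℝ :=
  ∑ ω, M.q ω * ∑ S ∈ M.I, ∑ l, e ω S l

/-- The weighted energy that users spend on transcoding down to the level they require. -/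
def transcodingEnergy (y : Finset ι → ι → Λ → ℝ) : ℝ :=
  M.β * ∑ S ∈ M.I, ∑ k ∈ S, M.N S * M.E k * (∑ l, M.v l * y S k l - M.r k)

/-- The penalty `P(y)` of Problem 5. -/
def penalty (y : Finset ι → ι → Λ → ℝ) : ℝ := ∑ S ∈ M.I, ∑ k ∈ S, fractionality (y S k)

/-- The objective of Problem 3. -/
def objective (x : (Finset ι → ι → Λ → ℝ) ×
    (Ω → Finset ι → Λ → ℝ) × (Ω → Finset ι → Λ → ℝ)) : ℝ :=
  M.transmissionEnergy (fun ω S l ↦ x.2.1 ω S l * x.2.2 ω S l) + M.transcodingEnergy x.1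

/-- The objective of Problem 5 with penalty parameter `ρ`. -/
def penalizedObjective (ρ : ℝ) (z : (Finset ι → ι → Λ → ℝ) ×
    (Ω → Finset ι → Λ → ℝ) × (Ω → Finset ι → Λ → ℝ)) : ℝ :=
  M.transmissionEnergy z.2.2 + M.transcodingEnergy z.1 + ρ * M.penalty z.1

variable {M} {y y' : Finset ι → ι → Λ → ℝ} {t p e : Ω → Finset ι → Λ → ℝ}

section ChangeOfVariables

lemma mul_mem_relaxedFeasible (hx : (y, t, p) ∈ M.binaryFeasible) :
    (y, t, fun ω S l ↦ t ω S l * p ω S l) ∈ M.relaxedFeasible := by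
  obtain ⟨ht, hp, hT, hbin, hsum, hreq, hthr⟩ := hx
  refine ⟨ht, fun ω S l ↦ mul_nonneg (ht ω S l) (hp ω S l), hT, fun S hS k hk l ↦ ?_, hsum, hreq,
    fun S hS k hk l ↦ (hthr S hS k hk l).trans_eq (M.throughput_mul (fun ω ↦ ht ω S l) k _).symm⟩
  rcases hbin S hS k hk l with h | h <;> simp only at h <;> simp [h]

lemma div_mem_binaryFeasible (hz : (y, t, e) ∈ M.relaxedFeasible)
    (hy : ∀ S ∈ M.I, ∀ k ∈ S, ∀ l, y S k l = 0 ∨ y S k l = 1) :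
    (y, t, fun ω S l ↦ e ω S l / t ω S l) ∈ M.binaryFeasible := by
  obtain ⟨ht, he, hT, -, hsum, hreq, hthr⟩ := hz
  exact ⟨ht, fun ω S l ↦ div_nonneg (he ω S l) (ht ω S l), hT, hy, hsum, hreq,
    fun S hS k hk l ↦ (hthr S hS k hk l).trans_eq (M.throughput_of_nonneg (fun ω ↦ ht ω S l) k _)⟩

lemma penalizedObjective_mul (hx : (y, t, p) ∈ M.binaryFeasible) (ρ : ℝ) :
    M.penalizedObjective ρ (y, t, fun ω S l ↦ t ω S l * p ω S l) = M.objective (y, t, p) := by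
  obtain ⟨-, -, -, hbin, -⟩ := hx
  have hP : M.penalty y = 0 := Finset.sum_eq_zero fun S hS ↦ Finset.sum_eq_zero fun k hk ↦
    fractionality_eq_zero (hbin S hS k hk)
  rw [penalizedObjective, objective, hP, mul_zero, add_zero]

lemma transmissionEnergy_mono {e' : Ω → Finset ι → Λ → ℝ} (h : ∀ ω S l, e ω S l ≤ e' ω S l) :
    M.transmissionEnergy e ≤ M.transmissionEnergy e' := by
  unfold transmissionEnergy
  gcongr with ω _ S _ l _
  · exact M.q_nonneg ω
  · exact h ω S l

lemma objective_div_le (ht : ∀ ω S l, 0 ≤ t ω S l) (he : ∀ ω S l, 0 ≤ e ω S l) :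
    M.objective (y, t, fun ω S l ↦ e ω S l / t ω S l) ≤
      M.transmissionEnergy e + M.transcodingEnergy y := by
  refine add_le_add_left (transmissionEnergy_mono fun ω S l ↦ ?_) _
  rcases (ht ω S l).eq_or_lt with h | h
  · simpa [← h] using he ω S l
  · exact (mul_div_cancel₀ _ h.ne').le

lemma objective_nonneg (hx : (y, t, p) ∈ M.binaryFeasible) : 0 ≤ M.objective (y, t, p) := by
  obtain ⟨ht, hp, -, -, -, hreq, -⟩ := hx
  refine add_nonneg (Finset.sum_nonneg fun ω _ ↦ mul_nonneg (M.q_nonneg ω)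
    (Finset.sum_nonneg fun S _ ↦ Finset.sum_nonneg fun l _ ↦ mul_nonneg (ht ω S l) (hp ω S l)))
    (mul_nonneg M.β_nonneg (Finset.sum_nonneg fun S hS ↦ Finset.sum_nonneg fun k hk ↦ ?_))
  exact mul_nonneg (mul_nonneg (Nat.cast_nonneg _) (M.E_nonneg k)) (sub_nonneg.2 (hreq S hS k hk))

end ChangeOfVariables

section SlaterPoint

variable (M)

/-- Giving every transmission time `t₀` and energy `c` in every state respects the time budget and
carries twice the data of every level to every user. The factor `2` is the slack that is traded
for rounding errors. -/
structure IsSlater (t₀ c : ℝ) : Prop where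
  time_nonneg : 0 ≤ t₀
  energy_nonneg : 0 ≤ c
  card_mul_le : M.I.card * (Fintype.card Λ * t₀) ≤ M.T
  le_throughput : ∀ S ∈ M.I, ∀ k ∈ S, ∀ l,
    M.N S * M.D l * 2 ≤ M.throughput k (fun _ ↦ t₀) fun _ ↦ c

lemma exists_isSlater : ∃ t₀ c, M.IsSlater t₀ c := by
  have hT : 0 < M.T := M.T_pos
  obtain ⟨t₀, ht₀, hcard⟩ : ∃ t₀ > 0, M.I.card * (Fintype.card Λ * t₀) ≤ M.T := by
    obtain ⟨t₀, ht₀, h⟩ := exists_pos_mul_lt hT (M.I.card * Fintype.card Λ : ℝ)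
    exact ⟨t₀, ht₀, (mul_assoc _ _ _).symm.trans_le h.le⟩
  have hlarge : ∀ᶠ c in atTop, ∀ S ∈ M.I, ∀ k ∈ S, ∀ l,
      M.N S * M.D l * 2 ≤ M.throughput k (fun _ ↦ t₀) fun _ ↦ c :=
    (eventually_all_finset _).2 fun S _ ↦ (eventually_all_finset _).2 fun k _ ↦
      eventually_all.2 fun _ ↦ (M.tendsto_throughput_atTop k ht₀).eventually_ge_atTop _
  obtain ⟨c, hc, hthr⟩ := ((eventually_ge_atTop 0).and hlarge).exists
  exact ⟨t₀, c, ht₀.le, hc, hcard, hthr⟩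

end SlaterPoint

section ExactPenalty

lemma le_throughput_blend {t₀ c s : ℝ} (hslater : M.IsSlater t₀ c) (hs : s ∈ Set.Icc 0 1)
    (hz : (y, t, e) ∈ M.relaxedFeasible) {S : Finset ι} (hS : S ∈ M.I) {k : ι} (hk : k ∈ S)
    {l : Λ} {b : ℝ} (hb : b ≤ y S k l + s) :
    M.N S * M.D l * b ≤
      M.throughput k (fun ω ↦ blend s t t₀ ω S l) fun ω ↦ blend s e c ω S l := by
  obtain ⟨ht, he, -, hy, -, -, hthr⟩ := hz
  have hs' : 0 ≤ 1 - s := sub_nonneg.2 hs.2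
  have hb' : b ≤ (1 - s) * y S k l + s * 2 := by
    linarith [mul_le_of_le_one_right hs.1 (hy S hS k hk l).2]
  calc M.N S * M.D l * b
      ≤ M.N S * M.D l * ((1 - s) * y S k l + s * 2) :=
        mul_le_mul_of_nonneg_left hb' (mul_nonneg (Nat.cast_nonneg _) (M.D_nonneg l))
    _ = (1 - s) * (M.N S * M.D l * y S k l) + s * (M.N S * M.D l * 2) := by ring
    _ ≤ (1 - s) * M.throughput k (fun ω ↦ t ω S l) (fun ω ↦ e ω S l) +
          s * M.throughput k (fun _ ↦ t₀) (fun _ ↦ c) :=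
        add_le_add (mul_le_mul_of_nonneg_left (hthr S hS k hk l) hs')
          (mul_le_mul_of_nonneg_left (hslater.le_throughput S hS k hk l) hs.1)
    _ ≤ M.throughput k (fun ω ↦ blend s t t₀ ω S l) fun ω ↦ blend s e c ω S l :=
        (M.concaveOn_throughput k).2
          (x := (fun ω ↦ t ω S l, fun ω ↦ e ω S l)) ⟨fun ω ↦ ht ω S l, fun ω ↦ he ω S l⟩
          (y := (fun _ ↦ t₀, fun _ ↦ c))
          ⟨fun _ ↦ hslater.time_nonneg, fun _ ↦ hslater.energy_nonneg⟩
          hs' hs.1 (sub_add_cancel 1 s)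

lemma blend_mem_relaxedFeasible {t₀ c ε : ℝ} (hslater : M.IsSlater t₀ c) (hε : 0 ≤ ε)
    (hz : (y, t, e) ∈ M.relaxedFeasible)
    (hy' : ∀ S ∈ M.I, ∀ k ∈ S, IsRounding M.v (M.r k) ε (y S k) (y' S k)) :
    (y', blend (min 1 ε) t t₀, blend (min 1 ε) e c) ∈ M.relaxedFeasible := by
  have hs : min 1 ε ∈ Set.Icc 0 1 := ⟨le_min zero_le_one hε, min_le_left 1 ε⟩
  have ⟨ht, he, hT, hy, _⟩ := hz
  have h01 (S) (hS : S ∈ M.I) (k) (hk : k ∈ S) (l : Λ) : 0 ≤ y' S k l ∧ y' S k l ≤ 1 := by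
    rcases (hy' S hS k hk).binary l with h | h <;> simp [h]
  refine ⟨blend_nonneg hs ht hslater.time_nonneg, blend_nonneg hs he hslater.energy_nonneg,
    fun ω ↦ ?_, h01, fun S hS k hk ↦ (hy' S hS k hk).sum_eq_one,
    fun S hS k hk ↦ (hy' S hS k hk).requirement_le,
    fun S hS k hk l ↦ le_throughput_blend hslater hs hz hS hk ?_⟩
  · calc ∑ S ∈ M.I, ∑ l, blend (min 1 ε) t t₀ ω S l
        = (1 - min 1 ε) * ∑ S ∈ M.I, ∑ l, t ω S l +
            min 1 ε * (M.I.card * (Fintype.card Λ * t₀)) := sum_blend ..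
      _ ≤ (1 - min 1 ε) * M.T + min 1 ε * M.T :=
        add_le_add (mul_le_mul_of_nonneg_left (hT ω) (sub_nonneg.2 hs.2))
          (mul_le_mul_of_nonneg_left hslater.card_mul_le hs.1)
      _ = M.T := by ring
  · rw [← min_add_add_left]
    exact le_min ((h01 S hS k hk l).2.trans (le_add_of_nonneg_left (hy S hS k hk l).1))
      ((hy' S hS k hk).le_add l)

lemma transmissionEnergy_blend_le {s : ℝ} (hs : 0 ≤ s) (he : ∀ ω S l, 0 ≤ e ω S l) (c : ℝ) :
    M.transmissionEnergy (blend s e c) ≤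
      M.transmissionEnergy e + s * (M.I.card * (Fintype.card Λ * c)) := by
  calc M.transmissionEnergy (blend s e c)
      ≤ ∑ ω, M.q ω * (∑ S ∈ M.I, ∑ l, e ω S l + s * (M.I.card * (Fintype.card Λ * c))) := by
        unfold transmissionEnergy
        gcongr with ω
        · exact M.q_nonneg ω
        rw [sum_blend]
        gcongr
        exact mul_le_of_le_one_left (Finset.sum_nonneg fun S _ ↦ Finset.sum_nonneg fun l _ ↦
          he ω S l) (sub_le_self 1 hs)
    _ = M.transmissionEnergy e + s * (M.I.card * (Fintype.card Λ * c)) := by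
        simp only [transmissionEnergy, mul_add, Finset.sum_add_distrib]
        rw [← Finset.sum_mul, M.sum_q, one_mul]

lemma transcodingEnergy_le {ε : ℝ}
    (hy' : ∀ S ∈ M.I, ∀ k ∈ S, IsRounding M.v (M.r k) ε (y S k) (y' S k)) :
    M.transcodingEnergy y' ≤
      M.transcodingEnergy y + M.β * (∑ S ∈ M.I, ∑ k ∈ S, M.N S * M.E k) * ε := by
  simp only [transcodingEnergy, mul_assoc M.β, ← mul_add, Finset.sum_mul,
    ← Finset.sum_add_distrib]
  refine mul_le_mul_of_nonneg_left (Finset.sum_le_sum fun S hS ↦ Finset.sum_le_sum fun k hk ↦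
    mul_le_mul_of_nonneg_left ?_ (mul_nonneg (Nat.cast_nonneg _) (M.E_nonneg k))) M.β_nonneg
  linarith [(hy' S hS k hk).value_le]

lemma mem_stdSimplex_of_mem_relaxedFeasible (hz : (y, t, e) ∈ M.relaxedFeasible) {S : Finset ι}
    (hS : S ∈ M.I) {k : ι} (hk : k ∈ S) : y S k ∈ stdSimplex ℝ Λ :=
  ⟨fun l ↦ (hz.2.2.2.1 S hS k hk l).1, hz.2.2.2.2.1 S hS k hk⟩

lemma penalty_nonneg (hz : (y, t, e) ∈ M.relaxedFeasible) : 0 ≤ M.penalty y :=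
  Finset.sum_nonneg fun _ hS ↦ Finset.sum_nonneg fun _ hk ↦
    fractionality_nonneg (mem_stdSimplex_of_mem_relaxedFeasible hz hS hk)

lemma fractionality_le_penalty (hz : (y, t, e) ∈ M.relaxedFeasible) {S : Finset ι}
    (hS : S ∈ M.I) {k : ι} (hk : k ∈ S) : fractionality (y S k) ≤ M.penalty y := by
  have hfrac (S) (hS : S ∈ M.I) (k) (hk : k ∈ S) : 0 ≤ fractionality (y S k) :=
    fractionality_nonneg (mem_stdSimplex_of_mem_relaxedFeasible hz hS hk)
  exact (Finset.single_le_sum (f := fun k ↦ fractionality (y S k)) (hfrac S hS) hk).trans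
    (Finset.single_le_sum (f := fun S ↦ ∑ k ∈ S, fractionality (y S k))
      (fun S hS ↦ Finset.sum_nonneg (hfrac S hS)) hS)

variable (M)

lemma exists_isRounding : ∃ C ≥ 0, ∀ y t e, (y, t, e) ∈ M.relaxedFeasible →
    ∃ y' : Finset ι → ι → Λ → ℝ, ∀ S ∈ M.I, ∀ k ∈ S,
      IsRounding M.v (M.r k) (C * M.penalty y) (y S k) (y' S k) := by
  have hround : ∀ᶠ C in atTop, ∀ S ∈ M.I, ∀ k ∈ S, ∀ y ∈ stdSimplex ℝ Λ,
      M.r k ≤ ∑ l, M.v l * y l → ∃ y', IsRounding M.v (M.r k) (C * fractionality y) y y' :=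
    (eventually_all_finset _).2 fun S _ ↦ (eventually_all_finset _).2 fun k _ ↦
      eventually_exists_isRounding M.v (M.r k)
  obtain ⟨C, hC, hround⟩ := ((eventually_ge_atTop 0).and hround).exists
  refine ⟨C, hC, fun y t e hz ↦ ?_⟩
  have ⟨_, _, _, _, _, hreq, _⟩ := hz
  have huser (S) (hS : S ∈ M.I) (k) (hk : k ∈ S) :=
    hround S hS k hk (y S k) (mem_stdSimplex_of_mem_relaxedFeasible hz hS hk) (hreq S hS k hk)
  choose! y' hy' using huser
  exact ⟨y', fun S hS k hk ↦ (hy' S hS k hk).mono <|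
    mul_le_mul_of_nonneg_left (fractionality_le_penalty hz hS hk) hC⟩

lemma exists_objective_le_penalizedObjective : ∃ ρ₀ > 0, ∀ z ∈ M.relaxedFeasible, ∀ ρ ≥ ρ₀,
    ∃ x ∈ M.binaryFeasible, M.objective x ≤ M.penalizedObjective ρ z := by
  obtain ⟨t₀, c, hslater⟩ := M.exists_isSlater
  obtain ⟨C, hC, hround⟩ := M.exists_isRounding
  set A : ℝ := M.I.card * (Fintype.card Λ * c)
  set W : ℝ := M.β * ∑ S ∈ M.I, ∑ k ∈ S, M.N S * M.E k
  have hA : 0 ≤ A := by have := hslater.energy_nonneg; positivity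
  refine ⟨max 1 ((A + W) * C), by positivity, fun ⟨y, t, e⟩ hz ρ hρ ↦ ?_⟩
  obtain ⟨y', hy'⟩ := hround y t e hz
  set ε : ℝ := C * M.penalty y
  have hε : 0 ≤ ε := mul_nonneg hC (penalty_nonneg hz)
  have hz' := blend_mem_relaxedFeasible hslater hε hz hy'
  refine ⟨_, div_mem_binaryFeasible hz' fun S hS k hk ↦ (hy' S hS k hk).binary, ?_⟩
  calc _ ≤ M.transmissionEnergy (blend (min 1 ε) e c) + M.transcodingEnergy y' :=
        objective_div_le hz'.1 hz'.2.1
    _ ≤ (M.transmissionEnergy e + min 1 ε * A) + (M.transcodingEnergy y + W * ε) :=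
        add_le_add (transmissionEnergy_blend_le (le_min zero_le_one hε) hz.2.1 c)
          (transcodingEnergy_le hy')
    _ ≤ (M.transmissionEnergy e + ε * A) + (M.transcodingEnergy y + W * ε) := by
        gcongr
        exact min_le_right 1 ε
    _ = M.penalizedObjective ((A + W) * C) (y, t, e) := by
        simp only [penalizedObjective, ε]
        ring
    _ ≤ M.penalizedObjective ρ (y, t, e) := by
        unfold penalizedObjective
        gcongr
        · exact penalty_nonneg hz
        · exact (le_max_right _ _).trans hρ

end ExactPenalty

end MulticastProblem

theorem stmt_12_general {ι Ω Λ : Type*} [Fintype Ω] [Fintype Λ] (M : MulticastProblem ι Ω Λ)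
    (hne : M.binaryFeasible.Nonempty) :
    ∃ ρ₀ > 0, ∀ ρ > ρ₀, IsGLB (M.penalizedObjective ρ '' M.relaxedFeasible)
      (sInf (M.objective '' M.binaryFeasible)) := by
  obtain ⟨ρ₀, hρ₀, hround⟩ := M.exists_objective_le_penalizedObjective
  refine ⟨ρ₀, hρ₀, fun ρ hρ ↦ ?_⟩
  have hbdd : BddBelow (M.objective '' M.binaryFeasible) :=
    ⟨0, Set.forall_mem_image.2 fun _ ↦ MulticastProblem.objective_nonneg⟩
  refine (isGLB_congr (Set.Subset.antisymm (lowerBounds_mono_of_isCoinitialFor ?_)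
    (lowerBounds_mono_of_isCoinitialFor ?_))).2 (isGLB_csInf (hne.image _) hbdd)
  · rintro _ ⟨x, hx, rfl⟩
    exact ⟨_, ⟨_, MulticastProblem.mul_mem_relaxedFeasible hx, rfl⟩,
      (MulticastProblem.penalizedObjective_mul hx ρ).le⟩
  · rintro _ ⟨z, hz, rfl⟩
    obtain ⟨x, hx, hle⟩ := hround z hz ρ hρ.le
    exact ⟨_, ⟨x, hx, rfl⟩, hle⟩

/-- Exact penalty: if the feasible set of Problem 3 (energy
minimization with user transcoding, binary selection variables `y`) is
nonempty, then there exists `ρ₀ > 0` such that for all `ρ > ρ₀` the optimal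
value of the penalized DC Problem 5 (change of variables `e = t·p`, binary
constraints relaxed to `0 ≤ y ≤ 1`, penalty `ρ·∑ y·(1−y)` added to the
objective) equals the optimal value `Ē*` of Problem 3.
Quality levels `{1,…,L}` are modeled by `Fin L`, the level value of `l : Fin L`
being `(l : ℕ) + 1`. -/
theorem stmt_12 {ι Ω : Type*} [Fintype ι] [Fintype Ω] [Nonempty Ω]
    (L : ℕ) (hL : 1 ≤ L)
    (D : Fin L → ℝ) (hDpos : ∀ l, 0 < D l) (hDmono : StrictMono D)
    (r : ι → Fin L)
    (q : Ω → ℝ) (hq : ∀ ω, 0 ≤ q ω) (hq1 : ∑ ω, q ω = 1)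
    (H : Ω → ι → ℝ) (hH : ∀ ω k, 0 < H ω k)
    (B T n₀ : ℝ) (hB : 0 < B) (hT : 0 < T) (hn₀ : 0 < n₀)
    (I : Finset (Finset ι)) (hI : ∀ S ∈ I, S.Nonempty)
    (N : Finset ι → ℕ) (hN : ∀ S ∈ I, 0 < N S)
    (E : ι → ℝ) (hE : ∀ k, 0 ≤ E k) (β : ℝ) (hβ : 1 ≤ β)
    -- feasible set of Problem 3 (variables (y, t, p))
    (Feas3 : Set ((Finset ι → ι → Fin L → ℝ) ×
      (Ω → Finset ι → Fin L → ℝ) × (Ω → Finset ι → Fin L → ℝ)))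
    (hFeas3 : Feas3 =
      {ytp | (∀ ω S l, 0 ≤ ytp.2.1 ω S l) ∧ (∀ ω S l, 0 ≤ ytp.2.2 ω S l) ∧
        (∀ ω, ∑ S ∈ I, ∑ l, ytp.2.1 ω S l ≤ T) ∧
        (∀ S ∈ I, ∀ k ∈ S, ∀ l, ytp.1 S k l = 0 ∨ ytp.1 S k l = 1) ∧
        (∀ S ∈ I, ∀ k ∈ S, ∑ l, ytp.1 S k l = 1) ∧
        (∀ S ∈ I, ∀ k ∈ S,
          ((r k : ℕ) + 1 : ℝ) ≤ ∑ l : Fin L, ((l : ℕ) + 1 : ℝ) * ytp.1 S k l) ∧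
        (∀ S ∈ I, ∀ k ∈ S, ∀ l, (N S : ℝ) * D l * ytp.1 S k l ≤
          (B / T) * ∑ ω, q ω * (ytp.2.1 ω S l *
            (Real.log (1 + ytp.2.2 ω S l * H ω k / n₀) / Real.log 2)))})
    (hne : Feas3.Nonempty)
    -- feasible set of Problem 5 (variables (y, t, e), relaxed y)
    (Feas5 : Set ((Finset ι → ι → Fin L → ℝ) ×
      (Ω → Finset ι → Fin L → ℝ) × (Ω → Finset ι → Fin L → ℝ)))
    (hFeas5 : Feas5 =
      {yte | (∀ ω S l, 0 ≤ yte.2.1 ω S l) ∧ (∀ ω S l, 0 ≤ yte.2.2 ω S l) ∧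
        (∀ ω, ∑ S ∈ I, ∑ l, yte.2.1 ω S l ≤ T) ∧
        (∀ S ∈ I, ∀ k ∈ S, ∀ l, 0 ≤ yte.1 S k l ∧ yte.1 S k l ≤ 1) ∧
        (∀ S ∈ I, ∀ k ∈ S, ∑ l, yte.1 S k l = 1) ∧
        (∀ S ∈ I, ∀ k ∈ S,
          ((r k : ℕ) + 1 : ℝ) ≤ ∑ l : Fin L, ((l : ℕ) + 1 : ℝ) * yte.1 S k l) ∧
        (∀ S ∈ I, ∀ k ∈ S, ∀ l, (N S : ℝ) * D l * yte.1 S k l ≤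
          (B / T) * ∑ ω, q ω *
            phi (H ω k / n₀) (yte.2.1 ω S l) (yte.2.2 ω S l))}) :
    ∃ ρ₀ > (0 : ℝ), ∀ ρ > ρ₀,
      sInf ((fun yte : (Finset ι → ι → Fin L → ℝ) ×
          (Ω → Finset ι → Fin L → ℝ) × (Ω → Finset ι → Fin L → ℝ) =>
          (∑ ω, q ω * ∑ S ∈ I, ∑ l, yte.2.2 ω S l) +
          β * ∑ S ∈ I, ∑ k ∈ S, (N S : ℝ) * E k *
            ((∑ l : Fin L, ((l : ℕ) + 1 : ℝ) * yte.1 S k l) -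
              ((r k : ℕ) + 1 : ℝ)) +
          ρ * ∑ S ∈ I, ∑ k ∈ S, ∑ l : Fin L,
            yte.1 S k l * (1 - yte.1 S k l)) '' Feas5) =
      sInf ((fun ytp : (Finset ι → ι → Fin L → ℝ) ×
          (Ω → Finset ι → Fin L → ℝ) × (Ω → Finset ι → Fin L → ℝ) =>
          (∑ ω, q ω * ∑ S ∈ I, ∑ l, ytp.2.1 ω S l * ytp.2.2 ω S l) +
          β * ∑ S ∈ I, ∑ k ∈ S, (N S : ℝ) * E k *
            ((∑ l : Fin L, ((l : ℕ) + 1 : ℝ) * ytp.1 S k l) -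
              ((r k : ℕ) + 1 : ℝ))) '' Feas3) := by
  subst hFeas3 hFeas5
  let M : MulticastProblem ι Ω (Fin L) :=
    { D, q, H, B, T, n₀, I, N, E, β
      v := fun l ↦ (l : ℕ) + 1
      r := fun k ↦ (r k : ℕ) + 1
      D_nonneg := fun l ↦ (hDpos l).le
      q_nonneg := hq
      sum_q := hq1
      H_pos := hH
      B_pos := hB
      T_pos := hT
      n₀_pos := hn₀
      E_nonneg := hE
      β_nonneg := zero_le_one.trans hβ }
  obtain ⟨ρ₀, hρ₀, hglb⟩ := stmt_12_general M hne
  exact ⟨ρ₀, hρ₀, fun ρ hρ ↦ (hglb ρ hρ).csInf_eq (hglb ρ hρ).nonempty⟩
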